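/- arXiv:2601.07095 — 4 statements merged into one kernel-verified Lean document; each statement's English description precedes it below -/
import Mathlib

section
/- Let P > 0 and σ² > 0, let X and Z be independent real-valued random variables with X ~ gaussianReal 0 P and Z ~ gaussianReal 0 σ², and set Y = X + Z. Then the minimum mean-square error of estimating X from Y satisfies E[(X − E[X | σ(Y)])²] = P·σ²/(P + σ²). -/
open MeasureTheory ProbabilityTheory

/-- MMSE of the scalar Gaussian channel (Theorem 1): if `X ~ N(0, P)` and
`Z ~ N(0, σ²)` are independent and `Y = X + Z`, then
`E[(X − E[X | σ(Y)])²] = P·σ²/(P + σ²)`. -/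
theorem mmse_gaussian_channel
    {Ω : Type*} [MeasureSpace Ω] [IsProbabilityMeasure (ℙ : Measure Ω)]
    (P σ2 : ℝ) (hP : 0 < P) (hσ : 0 < σ2)
    (X Z : Ω → ℝ) (hX : Measurable X) (hZ : Measurable Z)
    (hXlaw : Measure.map X ℙ = gaussianReal 0 ⟨P, hP.le⟩)
    (hZlaw : Measure.map Z ℙ = gaussianReal 0 ⟨σ2, hσ.le⟩)
    (hindep : IndepFun X Z ℙ)
    (Y : Ω → ℝ) (hY : Y = fun ω => X ω + Z ω) :
    ∫ ω, (X ω - (ℙ[X | MeasurableSpace.comap Y Real.measurableSpace]) ω) ^ 2 ∂ℙ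
      = P * σ2 / (P + σ2) := by
  obtain ⟨p, hp, hXlaw⟩ : ∃ p : NNReal, (p : ℝ) = P ∧ Measure.map X ℙ = gaussianReal 0 p :=
    ⟨⟨P, hP.le⟩, rfl, hXlaw⟩
  obtain ⟨q, hq, hZlaw⟩ : ∃ q : NNReal, (q : ℝ) = σ2 ∧ Measure.map Z ℙ = gaussianReal 0 q :=
    ⟨⟨σ2, hσ.le⟩, rfl, hZlaw⟩
  have gX : HasGaussianLaw X ℙ := ⟨by rw [hXlaw]; infer_instance⟩
  have gZ : HasGaussianLaw Z ℙ := ⟨by rw [hZlaw]; infer_instance⟩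
  have lX := gX.memLp_two
  have lZ := gZ.memLp_two
  have iX := gX.integrable
  have iZ := gZ.integrable
  have eX : ∫ ω, X ω ∂ℙ = 0 := by
    have h := integral_map (μ := ℙ) (f := fun x : ℝ => x) hX.aemeasurable (by fun_prop)
    rw [hXlaw, integral_id_gaussianReal] at h
    exact h.symm
  have eZ : ∫ ω, Z ω ∂ℙ = 0 := by
    have h := integral_map (μ := ℙ) (f := fun x : ℝ => x) hZ.aemeasurable (by fun_prop)
    rw [hZlaw, integral_id_gaussianReal] at h
    exact h.symm
  have vX : Var[X; ℙ] = P := by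
    have h := variance_map (μ := ℙ) (X := fun x : ℝ => x) (Y := X) (by fun_prop) hX.aemeasurable
    rw [hXlaw, variance_fun_id_gaussianReal, hp] at h
    exact h.symm
  have vZ : Var[Z; ℙ] = σ2 := by
    have h := variance_map (μ := ℙ) (X := fun x : ℝ => x) (Y := Z) (by fun_prop) hZ.aemeasurable
    rw [hZlaw, variance_fun_id_gaussianReal, hq] at h
    exact h.symm
  have hXZ : cov[X, Z; ℙ] = 0 := hindep.covariance_eq_zero lX lZ
  have hs : P + σ2 ≠ 0 := by positivity
  obtain ⟨a, ha⟩ : ∃ a, a = P / (P + σ2) := ⟨_, rfl⟩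
  obtain ⟨b, hb⟩ : ∃ b, b = σ2 / (P + σ2) := ⟨_, rfl⟩
  obtain ⟨W, hW⟩ : ∃ W : Ω → ℝ, W = b • X - a • Z := ⟨_, rfl⟩
  have hY' : Y = X + Z := hY
  have hYm : Measurable Y := by rw [hY']; exact hX.add hZ
  have hWm : Measurable W := by rw [hW]; exact (hX.const_smul b).sub (hZ.const_smul a)
  have lW : MemLp W 2 ℙ := by rw [hW]; exact (lX.const_smul b).sub (lZ.const_smul a)
  have lY : MemLp Y 2 ℙ := by rw [hY']; exact lX.add lZ
  have iW : Integrable W ℙ := lW.integrable (by norm_num)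
  have iY : Integrable Y ℙ := lY.integrable (by norm_num)
  have eW : ∫ ω, W ω ∂ℙ = 0 := by
    rw [hW]
    simp only [Pi.sub_apply, Pi.smul_apply, smul_eq_mul]
    rw [integral_sub (iX.const_mul b) (iZ.const_mul a), integral_const_mul, integral_const_mul,
      eX, eZ]
    simp
  have vW : Var[W; ℙ] = P * σ2 / (P + σ2) := by
    rw [hW, variance_sub (lX.const_smul b) (lZ.const_smul a), variance_smul, variance_smul,
      covariance_smul_left, covariance_smul_right, hXZ, vX, vZ, ha, hb]
    field_simp
    ring
  have cWY : cov[W, Y; ℙ] = 0 := by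
    rw [hW, hY', covariance_sub_left (lX.const_smul b) (lZ.const_smul a) (lX.add lZ),
      covariance_smul_left, covariance_smul_left, covariance_add_right lX lX lZ,
      covariance_add_right lZ lX lZ, covariance_comm Z X, hXZ,
      covariance_self hX.aemeasurable, covariance_self hZ.aemeasurable, vX, vZ, ha, hb]
    field_simp
    ring
  have gWY : HasGaussianLaw (fun ω => (W ω, Y ω)) ℙ := by
    have h := (hindep.hasGaussianLaw gX gZ).map_fun
      ((b • ContinuousLinearMap.fst ℝ ℝ ℝ - a • ContinuousLinearMap.snd ℝ ℝ ℝ).prod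
        (ContinuousLinearMap.fst ℝ ℝ ℝ + ContinuousLinearMap.snd ℝ ℝ ℝ))
    rw [hW, hY']
    exact h
  have hind : IndepFun W Y ℙ := gWY.indepFun_of_covariance_eq_zero cWY
  have hle : MeasurableSpace.comap Y Real.measurableSpace ≤ MeasureSpace.toMeasurableSpace :=
    hYm.comap_le
  have hcW : ℙ[W | MeasurableSpace.comap Y Real.measurableSpace] =ᵐ[ℙ] fun _ => ∫ ω, W ω ∂ℙ :=
    condExp_indep_eq hWm.comap_le hle (comap_measurable W).stronglyMeasurable hind
  have hcY : ℙ[a • Y | MeasurableSpace.comap Y Real.measurableSpace] = a • Y :=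
    condExp_of_stronglyMeasurable hle
      ((comap_measurable Y).stronglyMeasurable.const_smul a) (iY.smul a)
  have hab : a + b = 1 := by rw [ha, hb]; field_simp
  have hXe : X = W + a • Y := by
    funext ω
    simp only [hW, hY', Pi.add_apply, Pi.sub_apply, Pi.smul_apply, smul_eq_mul]
    linear_combination (-X ω) * hab
  have hcX := condExp_add iW (iY.smul a) (MeasurableSpace.comap Y Real.measurableSpace)
  rw [← hXe, hcY] at hcX
  have hfin : ∀ᵐ ω ∂ℙ,
      (X ω - (ℙ[X | MeasurableSpace.comap Y Real.measurableSpace]) ω) ^ 2 = (W ω) ^ 2 := by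
    filter_upwards [hcX, hcW] with ω h1 h2
    have h3 := congrFun hXe ω
    simp only [Pi.add_apply] at h1 h3
    rw [h1, h2, eW, h3]
    ring
  rw [integral_congr_ae hfin, ← vW, variance_of_integral_eq_zero hWm.aemeasurable eW]
end

section
/- Let (Ω, 𝓕, ℙ) be a probability space, v > 0, X : Ω → ℝ an integrable random variable, and Z : Ω → ℝ a random variable independent of X with law gaussianReal 0 v. Set R = X + Z, let φ_v denote the density of gaussianReal 0 v with respect to Lebesgue measure, and define q(r) = ∫ φ_v(r − x) d(law of X)(x). Then q is a strictly positive, differentiable density of the law of R, and Tweedie's formula holds: E[X | σ(R)] = R + v·(q'(R)/q(R)) ℙ-almost surely; that is, the posterior mean equals the noisy observation plus v times the score of the marginal density of R. -/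
open MeasureTheory ProbabilityTheory

lemma tw_joint (μ : Measure ℝ) [IsProbabilityMeasure μ] (d : ℝ → ENNReal) (hd : Measurable d) :
    Measure.map (fun p : ℝ × ℝ => (p.1, p.1 + p.2)) (μ.prod (volume.withDensity d))
      = (μ.prod volume).withDensity (fun p => d (p.2 - p.1)) := by
  refine Measure.ext_of_lintegral _ fun f hf => ?_
  have hT : Measurable (fun p : ℝ × ℝ => (p.1, p.1 + p.2)) := by fun_prop
  rw [lintegral_map hf hT, prod_withDensity_right hd,
    lintegral_withDensity_eq_lintegral_mul _ (by fun_prop) (by fun_prop),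
    lintegral_withDensity_eq_lintegral_mul _ (by fun_prop) hf]
  have h := (measurePreserving_prod_add μ (volume : Measure ℝ)).lintegral_comp
    (f := fun p => d (p.2 - p.1) * f p) (by fun_prop)
  simp only [add_sub_cancel_left] at h
  simpa using h

lemma tw_bound (v : ℝ) (hv : 0 < v) (t : ℝ) : |t| * Real.exp (-t ^ 2 / (2 * v)) ≤ 1 + 2 * v := by
  have h1 := Real.add_one_le_exp (t ^ 2 / (2 * v))
  have h2 : |t| ≤ 1 + t ^ 2 := by
    rw [← sq_abs]; nlinarith [sq_nonneg (|t| - 1), abs_nonneg t]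
  have h3 : 1 + t ^ 2 ≤ (1 + 2 * v) * (t ^ 2 / (2 * v) + 1) := by
    have h4 : 2 * v * (t ^ 2 / (2 * v)) = t ^ 2 := by field_simp
    have h5 : 0 ≤ t ^ 2 / (2 * v) := by positivity
    nlinarith
  rw [neg_div, Real.exp_neg, ← div_eq_mul_inv, div_le_iff₀ (Real.exp_pos _)]
  have : (1 + 2 * v) * (t ^ 2 / (2 * v) + 1) ≤ (1 + 2 * v) * Real.exp (t ^ 2 / (2 * v)) := by
    gcongr
  linarith

theorem tweedie_formula
    {Ω : Type*} [MeasureSpace Ω] [IsProbabilityMeasure (ℙ : Measure Ω)]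
    (v : ℝ) (hv : 0 < v)
    (X Z : Ω → ℝ) (hX : Measurable X) (hZ : Measurable Z)
    (hXint : Integrable X ℙ)
    (hZlaw : Measure.map Z ℙ = gaussianReal 0 ⟨v, hv.le⟩)
    (hindep : IndepFun X Z ℙ)
    (R : Ω → ℝ) (hR : R = fun ω => X ω + Z ω)
    (q : ℝ → ℝ)
    (hq : q = fun r => ∫ x, gaussianPDFReal 0 ⟨v, hv.le⟩ (r - x) ∂(Measure.map X ℙ)) :
    (∀ r, 0 < q r) ∧ Differentiable ℝ q ∧
    Measure.map R ℙ = volume.withDensity (fun r => ENNReal.ofReal (q r)) ∧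
    ℙ[X | MeasurableSpace.comap R Real.measurableSpace]
      =ᵐ[ℙ] fun ω => R ω + v * (deriv q (R ω) / q (R ω)) := by
  have hv0 : (⟨v, hv.le⟩ : NNReal) ≠ 0 := by
    intro h; exact hv.ne' (congrArg NNReal.toReal h)
  set μ := Measure.map X ℙ with hμ
  have : IsProbabilityMeasure μ := Measure.isProbabilityMeasure_map hX.aemeasurable
  have hRm : Measurable R := by rw [hR]; fun_prop
  obtain ⟨φ, hφ⟩ : ∃ φ, φ = gaussianPDFReal 0 ⟨v, hv.le⟩ := ⟨_, rfl⟩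
  have hφm : Measurable φ := hφ ▸ measurable_gaussianPDFReal _ _
  have hφpos : ∀ t, 0 < φ t := fun t => hφ ▸ gaussianPDFReal_pos _ _ _ hv0
  obtain ⟨c, hc, hφe⟩ : ∃ c : ℝ, 0 < c ∧ φ = fun t => c * Real.exp (-t ^ 2 / (2 * v)) := by
    refine ⟨(√(2 * Real.pi * v))⁻¹, by positivity, ?_⟩
    rw [hφ]; funext t
    refine (congrFun (gaussianPDFReal_def 0 ⟨v, hv.le⟩) t).trans ?_
    change (√(2 * Real.pi * v))⁻¹ * Real.exp (-(t - 0) ^ 2 / (2 * v)) = _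
    rw [sub_zero]
  have hlaw : gaussianReal 0 ⟨v, hv.le⟩ = volume.withDensity (fun t => ENNReal.ofReal (φ t)) := by
    rw [gaussianReal_of_var_ne_zero _ hv0, hφ]; rfl
  rw [hlaw] at hZlaw
  rw [← hφ] at hq
  clear hlaw hφ
  have hφle : ∀ t, φ t ≤ c := by
    intro t; rw [hφe]
    have : Real.exp (-t ^ 2 / (2 * v)) ≤ 1 := by
      rw [Real.exp_le_one_iff, neg_div]
      have : 0 ≤ t ^ 2 / (2 * v) := by positivity
      linarith
    nlinarith
  have hφd : ∀ t, HasDerivAt φ (-(t / v) * φ t) t := by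
    intro t; rw [hφe]
    have := (((((hasDerivAt_id t).pow 2).neg).div_const (2 * v)).exp).const_mul c
    refine this.congr_deriv ?_
    simp only [id, Pi.pow_apply, Pi.neg_apply]
    field_simp
    simp [mul_comm]
  have hφ'b : ∀ t, ‖-(t / v) * φ t‖ ≤ c * (1 + 2 * v) / v := by
    intro t
    have h := tw_bound v hv t
    rw [norm_mul, norm_neg, norm_div, Real.norm_of_nonneg hv.le, Real.norm_of_nonneg (hφpos t).le,
      Real.norm_eq_abs, hφe]
    calc _ = c * (|t| * Real.exp (-t ^ 2 / (2 * v))) / v := by ring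
      _ ≤ _ := by gcongr
  have hF : ∀ r, Integrable (fun x => φ (r - x)) μ := fun r =>
    Integrable.of_bound (hφm.comp (measurable_const.sub measurable_id)).aestronglyMeasurable c
      (.of_forall fun x => by rw [Real.norm_of_nonneg (hφpos _).le]; exact hφle _)
  have hxint : Integrable (fun x : ℝ => x) μ := by
    rw [hμ]; exact (integrable_map_measure (by fun_prop) hX.aemeasurable).2 hXint
  have hxF : ∀ r, Integrable (fun x => φ (r - x) * x) μ := fun r =>
    hxint.bdd_mul (c := c) (hφm.comp (measurable_const.sub measurable_id)).aestronglyMeasurable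
      (.of_forall fun x => by rw [Real.norm_of_nonneg (hφpos _).le]; exact hφle _)
  have hqpos : ∀ r, 0 < q r := by
    intro r
    rw [hq]
    refine (integral_pos_iff_support_of_nonneg (fun x => (hφpos _).le) (hF r)).2 ?_
    have : Function.support (fun x => φ (r - x)) = Set.univ := by
      ext x; simp [(hφpos (r - x)).ne']
    rw [this]; simp
  have hqd : ∀ r, HasDerivAt q (∫ x, -((r - x) / v) * φ (r - x) ∂μ) r := by
    intro r
    rw [hq]
    refine (hasDerivAt_integral_of_dominated_loc_of_deriv_le (s := Set.univ)
      (bound := fun _ => c * (1 + 2 * v) / v)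
      (F := fun r x => φ (r - x)) (F' := fun r x => -((r - x) / v) * φ (r - x))
      Filter.univ_mem (.of_forall fun r => (hF r).aestronglyMeasurable) (hF r) (by fun_prop)
      (.of_forall fun x r _ => hφ'b _) (integrable_const _) (.of_forall fun x r _ => ?_)).2
    exact (hφd (r - x)).comp_sub_const r x
  have hqm : Measurable q := (show Differentiable ℝ q from
    fun r => (hqd r).differentiableAt).continuous.measurable
  have hN : ∀ r, q r * (r + v * (deriv q r / q r)) = ∫ x, φ (r - x) * x ∂μ := by
    intro r
    have h1 : v * deriv q r = (∫ x, φ (r - x) * x ∂μ) - r * q r := by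
      rw [(hqd r).deriv, hq, ← integral_const_mul, ← integral_const_mul,
        ← integral_sub (hxF r) ((hF r).const_mul r)]
      congr 1; funext x; field_simp; ring
    have := (hqpos r).ne'
    have h2 : q r * (r + v * (deriv q r / q r)) = q r * r + v * deriv q r := by field_simp
    rw [h2, h1]; ring
  -- joint law
  have hJ : Measure.map (fun ω => (X ω, R ω)) ℙ
      = (μ.prod volume).withDensity (fun p => ENNReal.ofReal (φ (p.2 - p.1))) := by
    rw [← tw_joint μ (fun t => ENNReal.ofReal (φ t)) (by fun_prop), ← hZlaw, hμ,
      ← (indepFun_iff_map_prod_eq_prod_map_map hX.aemeasurable hZ.aemeasurable).1 hindep,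
      Measure.map_map (by fun_prop) (by fun_prop), hR]
    rfl
  have hRlaw : Measure.map R ℙ = volume.withDensity (fun r => ENNReal.ofReal (q r)) := by
    have h0 : Measure.map R ℙ = Measure.map Prod.snd (Measure.map (fun ω => (X ω, R ω)) ℙ) := by
      rw [Measure.map_map (by fun_prop) (by fun_prop)]; rfl
    rw [h0, hJ]
    refine Measure.ext_of_lintegral _ fun f hf => ?_
    rw [lintegral_map hf measurable_snd,
      lintegral_withDensity_eq_lintegral_mul _ (by fun_prop) (by fun_prop),
      lintegral_withDensity_eq_lintegral_mul _ (by fun_prop) hf,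
      lintegral_prod_symm' _ (by fun_prop)]
    congr 1; funext r
    simp only [Pi.mul_apply]
    rw [lintegral_mul_const _ (by fun_prop), hq,
      ofReal_integral_eq_lintegral_ofReal (hF r) (.of_forall fun x => (hφpos _).le)]
  refine ⟨hqpos, fun r => (hqd r).differentiableAt, hRlaw, ?_⟩
  have hgm : Measurable (fun r => r + v * (deriv q r / q r)) :=
    measurable_id.add (((measurable_deriv q).div hqm).const_mul v)
  set g : ℝ → ℝ := fun r => r + v * (deriv q r / q r) with hg
  have hpair : Measurable (fun ω => (X ω, R ω)) := by fun_prop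
  have hI1 : Integrable (fun p : ℝ × ℝ => φ (p.2 - p.1) * p.1) (μ.prod volume) := by
    have h1 : Integrable (fun p : ℝ × ℝ => p.1) (Measure.map (fun ω => (X ω, R ω)) ℙ) :=
      (integrable_map_measure (by fun_prop) hpair.aemeasurable).2 hXint
    rw [hJ, integrable_withDensity_iff_integrable_smul' (by fun_prop) (by simp)] at h1
    simpa [ENNReal.toReal_ofReal (hφpos _).le] using h1
  have hgI : Integrable (fun ω => g (R ω)) ℙ := by
    have h1 := hI1.integral_prod_right
    have h2 : Integrable g (Measure.map R ℙ) := by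
      rw [hRlaw, integrable_withDensity_iff_integrable_smul' (by fun_prop) (by simp)]
      refine h1.congr (.of_forall fun r => ?_)
      simp only [ENNReal.toReal_ofReal (hqpos r).le, smul_eq_mul]
      exact (hN r).symm
    exact h2.comp_measurable hRm
  refine (ae_eq_condExp_of_forall_setIntegral_eq hRm.comap_le hXint
    (fun s _ _ => hgI.integrableOn) ?_ ?_).symm
  · rintro s ⟨B, hB, rfl⟩ -
    have e1 : ∫ ω in R ⁻¹' B, g (R ω) = ∫ r in B, q r * g r := by
      rw [← setIntegral_map (g := R) (f := g) hB (by fun_prop) hRm.aemeasurable, hRlaw,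
        restrict_withDensity hB,
        integral_withDensity_eq_integral_toReal_smul (by fun_prop) (by simp)]
      simp only [ENNReal.toReal_ofReal (hqpos _).le, smul_eq_mul]
    have e2 : ∫ ω in R ⁻¹' B, X ω = ∫ r in B, ∫ x, φ (r - x) * x ∂μ := by
      have hs : MeasurableSet (Set.univ ×ˢ B : Set (ℝ × ℝ)) := MeasurableSet.univ.prod hB
      have := setIntegral_map (μ := (ℙ : Measure Ω)) (g := fun ω => (X ω, R ω))
        (f := fun p : ℝ × ℝ => p.1) hs (by fun_prop) hpair.aemeasurable
      have hpre : (fun ω => (X ω, R ω)) ⁻¹' (Set.univ ×ˢ B) = R ⁻¹' B := by ext; simp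
      rw [hpre] at this
      rw [← this, hJ, restrict_withDensity hs,
        integral_withDensity_eq_integral_toReal_smul (by fun_prop) (by simp)]
      have hI2 := hI1.mono_measure (Measure.restrict_le_self (s := Set.univ ×ˢ B))
      rw [← Measure.prod_restrict, Measure.restrict_univ] at hI2 ⊢
      simp only [ENNReal.toReal_ofReal (hφpos _).le, smul_eq_mul]
      rw [integral_prod_symm _ hI2]
    change ∫ ω in R ⁻¹' B, g (R ω) = _
    rw [e1, e2]
    congr 1; funext r; exact hN r
  · exact (hgm.comp (comap_measurable R)).aestronglyMeasurable
end

section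
/- Let (Ω, 𝓕, ℙ) be a probability space, v > 0, X : Ω → ℝ an integrable random variable, Y : Ω → E a random variable with values in a standard Borel space E, and Z : Ω → ℝ a random variable with law gaussianReal 0 v independent of the pair (X, Y). Set R = X + Z, let κ = condDistrib X Y ℙ be a regular conditional distribution of X given Y, let φ_v denote the density of gaussianReal 0 v, and define g(r, y) = ∫ φ_v(r − x) d(κ y)(x). Then for (law of Y)-almost every y the function g(·, y) is strictly positive and differentiable, and the conditional Tweedie formula holds: E[X | σ(R, Y)] = R + v·((∂_r g)(R, Y)/g(R, Y)) ℙ-almost surely; that is, the posterior mean given both the Gaussian-corrupted input R and the side information Y equals R plus v times the conditional score of R given Y. -/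
open MeasureTheory ProbabilityTheory

open scoped ENNReal NNReal

lemma aux_hasDeriv (w : ℝ≥0) (hw : w ≠ 0) (u : ℝ) :
    HasDerivAt (gaussianPDFReal 0 w) (-(u / w) * gaussianPDFReal 0 w u) u := by
  have hw' : (w : ℝ) ≠ 0 := by exact_mod_cast hw
  rw [gaussianPDFReal_def]
  have h1 : HasDerivAt (fun x : ℝ => -(x - 0) ^ 2 / (2 * (w : ℝ))) (-(u / w)) u := by
    have := ((((hasDerivAt_id u).sub_const 0).pow 2).neg).div_const (2 * (w : ℝ))
    refine this.congr_deriv ?_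
    simp
    field_simp
  refine ((h1.exp).const_mul _).congr_deriv ?_
  ring

lemma aux_bound0 (w : ℝ≥0) (u : ℝ) :
    |gaussianPDFReal 0 w u| ≤ (√(2 * Real.pi * w))⁻¹ := by
  rw [abs_of_nonneg (gaussianPDFReal_nonneg _ _ _), gaussianPDFReal]
  refine mul_le_of_le_one_right (by positivity) ?_
  rw [Real.exp_le_one_iff]
  exact div_nonpos_of_nonpos_of_nonneg (by nlinarith [sq_nonneg (u - 0)]) (by positivity)

lemma aux_bound1 (w : ℝ≥0) (hw : w ≠ 0) (u : ℝ) :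
    |-(u / w) * gaussianPDFReal 0 w u| ≤ (1 + 2 * w) / w * (√(2 * Real.pi * w))⁻¹ := by
  have hw' : (0 : ℝ) < w := by exact_mod_cast pos_iff_ne_zero.2 hw
  have h0 := gaussianPDFReal_nonneg 0 w u
  rw [abs_mul, abs_of_nonneg h0, abs_neg, abs_div, abs_of_pos hw', gaussianPDFReal]
  have hs : (0 : ℝ) ≤ (√(2 * Real.pi * w))⁻¹ := by positivity
  have key : |u| * Real.exp (-(u - 0) ^ 2 / (2 * w)) ≤ 1 + 2 * w := by
    have h1 : -(u - 0) ^ 2 / (2 * w) = -(u ^ 2 / (2 * w)) := by ring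
    rw [h1, Real.exp_neg, ← div_eq_mul_inv, div_le_iff₀ (Real.exp_pos _)]
    have h2 := Real.add_one_le_exp (u ^ 2 / (2 * w))
    have h3 : |u| ≤ 1 + u ^ 2 := by
      rw [← sq_abs]; nlinarith [sq_nonneg (|u| - 1), abs_nonneg u]
    have h4 : (1 + 2 * (w : ℝ)) * (u ^ 2 / (2 * w) + 1) = u ^ 2 / (2 * w) + 1 + u ^ 2 + 2 * w := by
      field_simp
      ring
    have h5 : 0 ≤ u ^ 2 / (2 * (w : ℝ)) := by positivity
    have h6 : (1 + 2 * (w : ℝ)) * (u ^ 2 / (2 * w) + 1)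
      ≤ (1 + 2 * (w : ℝ)) * Real.exp (u ^ 2 / (2 * w)) := by gcongr
    linarith
  calc |u| / w * ((√(2 * Real.pi * w))⁻¹ * Real.exp (-(u - 0) ^ 2 / (2 * w)))
      = (|u| * Real.exp (-(u - 0) ^ 2 / (2 * w))) / w * (√(2 * Real.pi * w))⁻¹ := by ring
    _ ≤ _ := by gcongr

lemma aux_int (w : ℝ≥0) (μ : Measure ℝ) [IsProbabilityMeasure μ] (r : ℝ) :
    Integrable (fun x => gaussianPDFReal 0 w (r - x)) μ := by
  refine Integrable.of_bound (C := (√(2 * Real.pi * w))⁻¹) ?_ ?_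
  · exact ((measurable_gaussianPDFReal 0 w).comp (by fun_prop)).aestronglyMeasurable
  · exact ae_of_all _ fun x => aux_bound0 w _

lemma aux_pos (w : ℝ≥0) (hw : w ≠ 0) (μ : Measure ℝ) [IsProbabilityMeasure μ] (r : ℝ) :
    0 < ∫ x, gaussianPDFReal 0 w (r - x) ∂μ := by
  rw [integral_pos_iff_support_of_nonneg (fun x => gaussianPDFReal_nonneg _ _ _) (aux_int w μ r)]
  have : Function.support (fun x => gaussianPDFReal 0 w (r - x)) = Set.univ := by
    ext x
    simp [(gaussianPDFReal_pos 0 w (r - x) hw).ne']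
  rw [this]; simp

lemma aux_deriv (w : ℝ≥0) (hw : w ≠ 0) (μ : Measure ℝ) [IsProbabilityMeasure μ] (r : ℝ) :
    Integrable (fun x => -((r - x) / w) * gaussianPDFReal 0 w (r - x)) μ ∧
    HasDerivAt (fun r => ∫ x, gaussianPDFReal 0 w (r - x) ∂μ)
      (∫ x, -((r - x) / w) * gaussianPDFReal 0 w (r - x) ∂μ) r := by
  have hm : ∀ r : ℝ, Measurable (fun x => gaussianPDFReal 0 w (r - x)) := fun r =>
    (measurable_gaussianPDFReal 0 w).comp (by fun_prop)
  refine hasDerivAt_integral_of_dominated_loc_of_deriv_le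
    (F := fun r x => gaussianPDFReal 0 w (r - x))
    (F' := fun r x => -((r - x) / w) * gaussianPDFReal 0 w (r - x))
    (bound := fun _ => (1 + 2 * w) / w * (√(2 * Real.pi * w))⁻¹)
    (s := Set.univ) Filter.univ_mem ?_ (aux_int w μ r) ?_ ?_ (integrable_const _) ?_
  · exact Filter.Eventually.of_forall fun r => (hm r).aestronglyMeasurable
  · exact (Measurable.mul (by fun_prop) (hm r)).aestronglyMeasurable
  · exact ae_of_all _ fun x r _ => aux_bound1 w hw _
  · exact ae_of_all _ fun x r _ => (aux_hasDeriv w hw (r - x)).comp_sub_const r x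

lemma aux_tweedie (w : ℝ≥0) (hw : w ≠ 0) (μ : Measure ℝ) [IsProbabilityMeasure μ] (r : ℝ) :
    ∫ x, x * gaussianPDFReal 0 w (r - x) ∂μ = r * (∫ x, gaussianPDFReal 0 w (r - x) ∂μ) +
      w * deriv (fun r => ∫ x, gaussianPDFReal 0 w (r - x) ∂μ) r := by
  obtain ⟨h1, h2⟩ := aux_deriv w hw μ r
  have hw' : (w : ℝ) ≠ 0 := by exact_mod_cast hw
  rw [h2.deriv, ← integral_const_mul, ← integral_const_mul,
    ← integral_add ((aux_int w μ r).const_mul _) (h1.const_mul _)]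
  congr 1
  ext x
  field_simp
  ring

/-- unnormalised evidence -/
noncomputable def auxG {E : Type*} [MeasurableSpace E] (w : ℝ≥0) (κ : Kernel E ℝ) (p : ℝ × E) :
    ℝ≥0∞ := ∫⁻ x, gaussianPDF 0 w (p.1 - x) ∂(κ p.2)

section
variable {E : Type*} [MeasurableSpace E] (w : ℝ≥0) (κ : Kernel E ℝ) [IsMarkovKernel κ]

lemma auxG_eq (p : ℝ × E) :
    auxG w κ p = ENNReal.ofReal (∫ x, gaussianPDFReal 0 w (p.1 - x) ∂(κ p.2)) := by
  rw [ofReal_integral_eq_lintegral_ofReal (aux_int w _ _)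
    (ae_of_all _ fun x => gaussianPDFReal_nonneg _ _ _)]
  rfl

lemma auxG_ne_zero (hw : w ≠ 0) (p : ℝ × E) : auxG w κ p ≠ 0 := by
  rw [auxG_eq, ← pos_iff_ne_zero, ENNReal.ofReal_pos]
  exact aux_pos w hw _ _

lemma auxG_ne_top (p : ℝ × E) : auxG w κ p ≠ ∞ := by
  rw [auxG_eq]; exact ENNReal.ofReal_ne_top

lemma measurable_auxG : Measurable (auxG w κ) := by
  have h : Measurable (Function.uncurry fun (p : ℝ × E) (x : ℝ) => gaussianPDF 0 w (p.1 - x)) :=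
    (measurable_gaussianPDF 0 w).comp (by fun_prop)
  exact Measurable.lintegral_kernel_prod_right (κ := κ.comap (Prod.snd : ℝ × E → E) measurable_snd) h

/-- posterior density -/
noncomputable def auxD (p : ℝ × E) (x : ℝ) : ℝ≥0∞ := gaussianPDF 0 w (p.1 - x) / auxG w κ p

lemma measurable_auxD : Measurable (Function.uncurry (auxD w κ)) := by
  have h : Measurable (Function.uncurry fun (p : ℝ × E) (x : ℝ) => gaussianPDF 0 w (p.1 - x)) :=
    (measurable_gaussianPDF 0 w).comp (by fun_prop)
  exact h.div ((measurable_auxG w κ).comp measurable_fst)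

/-- posterior kernel -/
noncomputable def auxη : Kernel (ℝ × E) ℝ :=
  (κ.comap (Prod.snd : ℝ × E → E) measurable_snd).withDensity (auxD w κ)

lemma auxη_lintegral (p : ℝ × E) {f : ℝ → ℝ≥0∞} (hf : Measurable f) :
    ∫⁻ x, f x ∂(auxη w κ p) = ∫⁻ x, auxD w κ p x * f x ∂(κ p.2) := by
  rw [auxη, Kernel.lintegral_withDensity _ (measurable_auxD w κ) _ hf]
  rfl

lemma auxη_markov (hw : w ≠ 0) : IsMarkovKernel (auxη w κ) := by
  refine ⟨fun p => ⟨?_⟩⟩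
  have := auxη_lintegral w κ p (f := fun _ => 1) measurable_const
  rw [lintegral_one] at this
  rw [this]
  simp only [mul_one, auxD, div_eq_mul_inv]
  have hφr : Measurable (fun x => gaussianPDF 0 w (p.1 - x)) :=
    (measurable_gaussianPDF 0 w).comp (by fun_prop)
  rw [lintegral_mul_const _ hφr]
  exact ENNReal.mul_inv_cancel (auxG_ne_zero w κ hw p) (auxG_ne_top w κ p)

lemma auxη_integral (hw : w ≠ 0) (p : ℝ × E) :
    ∫ x, x ∂(auxη w κ p) = p.1 + w *
      (deriv (fun r => ∫ x, gaussianPDFReal 0 w (r - x) ∂(κ p.2)) p.1 /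
        ∫ x, gaussianPDFReal 0 w (p.1 - x) ∂(κ p.2)) := by
  have hG := aux_pos w hw (κ p.2) p.1
  have hT := aux_tweedie w hw (κ p.2) p.1
  have h1 : ∀ x, (auxD w κ p x).toReal • x =
      (x * gaussianPDFReal 0 w (p.1 - x)) / ∫ x, gaussianPDFReal 0 w (p.1 - x) ∂(κ p.2) := by
    intro x
    rw [auxD, ENNReal.toReal_div, auxG_eq, ENNReal.toReal_ofReal hG.le, toReal_gaussianPDF,
      smul_eq_mul]
    ring
  rw [auxη, Kernel.withDensity_apply _ (measurable_auxD w κ),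
    integral_withDensity_eq_integral_toReal_smul
      (Measurable.of_uncurry_left (measurable_auxD w κ))
      (ae_of_all _ fun x => ENNReal.div_lt_top gaussianPDF_ne_top (auxG_ne_zero w κ hw p))]
  simp_rw [h1]
  rw [Kernel.comap_apply, integral_div, hT]
  field_simp

end

lemma aux_joint {Ω : Type*} [MeasurableSpace Ω] (P : Measure Ω) [IsProbabilityMeasure P]
    {E : Type*} [MeasurableSpace E]
    (w : ℝ≥0) (hw : w ≠ 0)
    (X : Ω → ℝ) (Y : Ω → E) (Z : Ω → ℝ)
    (hX : Measurable X) (hY : Measurable Y) (hZ : Measurable Z)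
    (hZlaw : Measure.map Z P = gaussianReal 0 w)
    (hindep : IndepFun (fun ω => (X ω, Y ω)) Z P)
    (f : (ℝ × E) × ℝ → ℝ≥0∞) (hf : Measurable f) :
    ∫⁻ ω, f ((X ω + Z ω, Y ω), X ω) ∂P =
      ∫⁻ y, ∫⁻ r, ∫⁻ x, gaussianPDF 0 w (r - x) * f ((r, y), x) ∂(condDistrib X Y P y)
        ∂(volume : Measure ℝ) ∂(P.map Y) := by
  have hφ := measurable_gaussianPDF 0 w
  have hlaw := hindep.map_prod_eq_prod_map_map (hX.prodMk hY).aemeasurable hZ.aemeasurable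
  rw [hZlaw] at hlaw
  have hYX : P.map (fun ω => (Y ω, X ω)) = (P.map Y) ⊗ₘ condDistrib X Y P :=
    (compProd_map_condDistrib hX.aemeasurable).symm
  have hfm : Measurable (fun q : (ℝ × E) × ℝ => f ((q.1.1 + q.2, q.1.2), q.1.1)) :=
    hf.comp (by fun_prop)
  have l1 : Measurable (fun t : (E × ℝ) × ℝ => gaussianPDF 0 w (t.2 - t.1.2)) :=
    hφ.comp (by fun_prop)
  have l2 : Measurable (fun t : (E × ℝ) × ℝ => f ((t.2, t.1.1), t.1.2)) :=
    hf.comp (by fun_prop)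
  have hm' : Measurable (fun q : E × ℝ =>
      ∫⁻ r, gaussianPDF 0 w (r - q.2) * f ((r, q.1), q.2)) :=
    Measurable.lintegral_prod_right'
      (f := fun t : (E × ℝ) × ℝ => gaussianPDF 0 w (t.2 - t.1.2) * f ((t.2, t.1.1), t.1.2))
      (l1.mul l2)
  calc ∫⁻ ω, f ((X ω + Z ω, Y ω), X ω) ∂P
      = ∫⁻ q, f ((q.1.1 + q.2, q.1.2), q.1.1) ∂(P.map (fun ω => ((X ω, Y ω), Z ω))) := by
        rw [lintegral_map hfm (by fun_prop)]
    _ = ∫⁻ p, ∫⁻ z, f ((p.1 + z, p.2), p.1) ∂(gaussianReal 0 w)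
          ∂(P.map (fun ω => (X ω, Y ω))) := by
        rw [hlaw, lintegral_prod _ hfm.aemeasurable]
    _ = ∫⁻ p, ∫⁻ r, gaussianPDF 0 w (r - p.1) * f ((r, p.2), p.1) ∂(volume : Measure ℝ)
          ∂(P.map (fun ω => (X ω, Y ω))) := by
        refine lintegral_congr fun p => ?_
        have hfp : Measurable (fun z => f ((p.1 + z, p.2), p.1)) := hf.comp (by fun_prop)
        rw [gaussianReal_of_var_ne_zero _ hw, lintegral_withDensity_eq_lintegral_mul _ hφ hfp,
          ← lintegral_add_right_eq_self
            (fun r => gaussianPDF 0 w (r - p.1) * f ((r, p.2), p.1)) p.1]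
        refine lintegral_congr fun z => ?_
        simp [add_comm]
    _ = ∫⁻ q, ∫⁻ r, gaussianPDF 0 w (r - q.2) * f ((r, q.1), q.2) ∂(volume : Measure ℝ)
          ∂(P.map (fun ω => (Y ω, X ω))) := by
        have k1 : Measurable (fun t : (ℝ × E) × ℝ => gaussianPDF 0 w (t.2 - t.1.1)) :=
          hφ.comp (by fun_prop)
        have k2 : Measurable (fun t : (ℝ × E) × ℝ => f ((t.2, t.1.2), t.1.1)) :=
          hf.comp (by fun_prop)
        have hm : Measurable (fun p : ℝ × E =>
            ∫⁻ r, gaussianPDF 0 w (r - p.1) * f ((r, p.2), p.1)) :=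
          Measurable.lintegral_prod_right'
            (f := fun t : (ℝ × E) × ℝ => gaussianPDF 0 w (t.2 - t.1.1) * f ((t.2, t.1.2), t.1.1))
            (k1.mul k2)
        rw [lintegral_map hm (by fun_prop), lintegral_map hm' (by fun_prop)]
    _ = ∫⁻ y, ∫⁻ x, ∫⁻ r, gaussianPDF 0 w (r - x) * f ((r, y), x) ∂(volume : Measure ℝ)
          ∂(condDistrib X Y P y) ∂(P.map Y) := by
        rw [hYX, Measure.lintegral_compProd hm']
    _ = _ := by
        refine lintegral_congr fun y => ?_
        have h1 : Measurable (fun q : ℝ × ℝ => gaussianPDF 0 w (q.2 - q.1)) :=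
          hφ.comp (by fun_prop)
        have h2 : Measurable (fun q : ℝ × ℝ => f ((q.2, y), q.1)) := hf.comp (by fun_prop)
        exact lintegral_lintegral_swap
          (f := fun x r => gaussianPDF 0 w (r - x) * f ((r, y), x)) (h1.mul h2).aemeasurable

lemma aux_compProd {Ω : Type*} [MeasurableSpace Ω] (P : Measure Ω) [IsProbabilityMeasure P]
    {E : Type*} [MeasurableSpace E]
    (w : ℝ≥0) (hw : w ≠ 0)
    (X : Ω → ℝ) (Y : Ω → E) (Z : Ω → ℝ)
    (hX : Measurable X) (hY : Measurable Y) (hZ : Measurable Z)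
    (hZlaw : Measure.map Z P = gaussianReal 0 w)
    (hindep : IndepFun (fun ω => (X ω, Y ω)) Z P) :
    P.map (fun ω => ((X ω + Z ω, Y ω), X ω)) =
      P.map (fun ω => (X ω + Z ω, Y ω)) ⊗ₘ auxη w (condDistrib X Y P) := by
  have hφ := measurable_gaussianPDF 0 w
  set κ := condDistrib X Y P with hκ
  have := auxη_markov w κ hw
  refine Measure.ext_of_lintegral _ fun f hf => ?_
  rw [lintegral_map hf (by fun_prop), aux_joint P w hw X Y Z hX hY hZ hZlaw hindep f hf,
    Measure.lintegral_compProd hf]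
  have hm : Measurable (fun p : ℝ × E => ∫⁻ x, f (p, x) ∂(auxη w κ p)) :=
    Measurable.lintegral_kernel_prod_right (κ := auxη w κ) (f := fun p x => f (p, x)) hf
  rw [lintegral_map hm (by fun_prop)]
  have h2 := aux_joint P w hw X Y Z hX hY hZ hZlaw hindep
    (fun q => ∫⁻ x, f (q.1, x) ∂(auxη w κ q.1)) (hm.comp measurable_fst)
  simp only at h2
  rw [h2]
  refine lintegral_congr fun y => lintegral_congr fun r => ?_
  have hφr : Measurable (fun x => gaussianPDF 0 w (r - x)) := hφ.comp (by fun_prop)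
  rw [lintegral_mul_const _ hφr,
    auxη_lintegral w κ (r, y) (f := fun x => f ((r, y), x)) (hf.comp (by fun_prop))]
  change _ = auxG w κ (r, y) * _
  have hD : Measurable (fun x => auxD w κ (r, y) x * f ((r, y), x)) :=
    ((measurable_auxD w κ).of_uncurry_left).mul (hf.comp (by fun_prop))
  rw [← lintegral_const_mul _ hD]
  refine lintegral_congr fun x => ?_
  rw [← mul_assoc, auxD, ENNReal.mul_div_cancel (auxG_ne_zero w κ hw _) (auxG_ne_top w κ _)]

/-- Conditional Tweedie formula (eq. (1) with side information): for
`R = X + Z` with `Z ~ N(0, v)` independent of the pair `(X, Y)`, and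
`g(r, y) = ∫ φ_v(r − x) d(condDistrib X Y ℙ y)(x)` the conditional density of
`R` given `Y = y`, the function `g(·, y)` is a.s. strictly positive and
differentiable, and `E[X | σ(R, Y)] = R + v·(∂_r g)(R, Y)/g(R, Y)` a.s. -/
theorem conditional_tweedie_formula
    {Ω : Type*} [MeasureSpace Ω] [IsProbabilityMeasure (ℙ : Measure Ω)]
    {E : Type*} [MeasurableSpace E] [StandardBorelSpace E] [Nonempty E]
    (v : ℝ) (hv : 0 < v)
    (X : Ω → ℝ) (Y : Ω → E) (Z : Ω → ℝ)
    (hX : Measurable X) (hY : Measurable Y) (hZ : Measurable Z)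
    (hXint : Integrable X ℙ)
    (hZlaw : Measure.map Z ℙ = gaussianReal 0 ⟨v, hv.le⟩)
    (hindep : IndepFun (fun ω => (X ω, Y ω)) Z ℙ)
    (R : Ω → ℝ) (hR : R = fun ω => X ω + Z ω)
    (g : ℝ → E → ℝ)
    (hg : g = fun r y => ∫ x, gaussianPDFReal 0 ⟨v, hv.le⟩ (r - x) ∂(condDistrib X Y ℙ y)) :
    (∀ᵐ y ∂(Measure.map Y ℙ),
      (∀ r, 0 < g r y) ∧ Differentiable ℝ (fun r => g r y)) ∧
    ℙ[X | MeasurableSpace.comap (fun ω => (R ω, Y ω)) inferInstance]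
      =ᵐ[ℙ] fun ω =>
        R ω + v * (deriv (fun r => g r (Y ω)) (R ω) / g (R ω) (Y ω)) := by
  subst hR
  subst hg
  have hw : (⟨v, hv.le⟩ : ℝ≥0) ≠ 0 := by
    intro h
    exact hv.ne' (congrArg NNReal.toReal h)
  refine ⟨ae_of_all _ fun y => ⟨fun r => aux_pos _ hw _ r,
    fun r => (aux_deriv _ hw (condDistrib X Y ℙ y) r).2.differentiableAt⟩, ?_⟩
  have hRY : Measurable (fun ω => (X ω + Z ω, Y ω)) := by fun_prop
  have := auxη_markov ⟨v, hv.le⟩ (condDistrib X Y ℙ) hw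
  have h1 := condExp_ae_eq_integral_condDistrib' (μ := ℙ) hRY hXint
  have h2 := ae_of_ae_map hRY.aemeasurable
    (condDistrib_ae_eq_of_measure_eq_compProd (μ := ℙ) (fun ω => (X ω + Z ω, Y ω)) hX.aemeasurable
      (aux_compProd ℙ ⟨v, hv.le⟩ hw X Y Z hX hY hZ hZlaw hindep))
  refine h1.trans ?_
  filter_upwards [h2] with ω hω
  rw [hω, auxη_integral _ _ hw]
  rfl
end

section
/- Let (Ω, 𝓕, ℙ) be a probability space, v > 0, X : Ω → ℝ an integrable random variable, and Z : Ω → ℝ a random variable independent of X with law gaussianReal 0 v. Set R = X + Z, let φ_v denote the density of gaussianReal 0 v with respect to Lebesgue measure, and define q(r) = ∫ φ_v(r − x) d(law of X)(x). Then the posterior mean of the noise satisfies E[Z | σ(R)] = −v·(q'(R)/q(R)) ℙ-almost surely; that is, the conditional expectation of the Gaussian noise given the noisy observation equals minus v times the score of the marginal density of R. -/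
open MeasureTheory ProbabilityTheory

lemma aux_map_shear (μ : Measure ℝ) [IsProbabilityMeasure μ] (w : NNReal) (hw : w ≠ 0) :
    (μ.prod (gaussianReal 0 w)).map (fun z : ℝ × ℝ => (z.1, z.1 + z.2))
      = (μ.prod volume).withDensity (fun z => gaussianPDF 0 w (z.2 - z.1)) := by
  have hm := measurable_gaussianPDF 0 w
  have hT : MeasurePreserving (fun z : ℝ × ℝ => (z.1, z.1 + z.2)) (μ.prod volume)
      (μ.prod volume) := measurePreserving_prod_add μ volume
  rw [gaussianReal_of_var_ne_zero 0 hw, prod_withDensity_right hm]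
  ext s hs
  rw [Measure.map_apply hT.measurable hs, withDensity_apply _ (hT.measurable hs),
    withDensity_apply _ hs]
  rw [← hT.setLIntegral_comp_preimage hs (by fun_prop)]
  simp

lemma aux_key {Ω : Type*} [MeasurableSpace Ω] (P : Measure Ω) [IsProbabilityMeasure P]
    (w : NNReal) (hw : w ≠ 0) (X Z : Ω → ℝ) (hX : Measurable X) (hZ : Measurable Z)
    (hZlaw : Measure.map Z P = gaussianReal 0 w) (hindep : IndepFun X Z P) :
    P.map (fun ω => (X ω, X ω + Z ω))
      = ((P.map X).prod volume).withDensity (fun z => gaussianPDF 0 w (z.2 - z.1)) := by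
  have : IsProbabilityMeasure (P.map X) := Measure.isProbabilityMeasure_map hX.aemeasurable
  rw [← aux_map_shear _ w hw, ← hZlaw,
    ← (indepFun_iff_map_prod_eq_prod_map_map hX.aemeasurable hZ.aemeasurable).1 hindep,
    Measure.map_map (by fun_prop) (by fun_prop)]
  rfl

lemma aux_int_s11 {Ω : Type*} [MeasurableSpace Ω] (P : Measure Ω) [IsProbabilityMeasure P]
    (w : NNReal) (hw : w ≠ 0) (X Z : Ω → ℝ) (hX : Measurable X) (hZ : Measurable Z)
    (hZlaw : Measure.map Z P = gaussianReal 0 w) (hindep : IndepFun X Z P)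
    (k : ℝ × ℝ → ℝ) (hk : Measurable k)
    (hi : Integrable (fun ω => k (X ω, X ω + Z ω)) P) :
    Integrable (fun r => ∫ x, gaussianPDFReal 0 w (r - x) * k (x, r) ∂(P.map X)) volume ∧
    ∫ ω, k (X ω, X ω + Z ω) ∂P
      = ∫ r, ∫ x, gaussianPDFReal 0 w (r - x) * k (x, r) ∂(P.map X) := by
  have : IsProbabilityMeasure (P.map X) := Measure.isProbabilityMeasure_map hX.aemeasurable
  have hm := measurable_gaussianPDF 0 w
  have hmm : Measurable (fun z : ℝ × ℝ => gaussianPDF 0 w (z.2 - z.1)) := by fun_prop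
  have hL := aux_key P w hw X Z hX hZ hZlaw hindep
  have hT : Measurable (fun ω => (X ω, X ω + Z ω)) := by fun_prop
  have h1 : Integrable k (P.map (fun ω => (X ω, X ω + Z ω))) :=
    (integrable_map_measure hk.aestronglyMeasurable hT.aemeasurable).2 hi
  rw [hL, integrable_withDensity_iff_integrable_smul' hmm
    (Filter.Eventually.of_forall fun _ => gaussianPDF_lt_top)] at h1
  have h2 : ∫ ω, k (X ω, X ω + Z ω) ∂P = ∫ z, k z ∂(P.map (fun ω => (X ω, X ω + Z ω))) :=
    (integral_map hT.aemeasurable hk.aestronglyMeasurable).symm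
  rw [hL, integral_withDensity_eq_integral_toReal_smul hmm
    (Filter.Eventually.of_forall fun _ => gaussianPDF_lt_top), integral_prod_symm _ h1] at h2
  have h3 := h1.integral_prod_right
  simp only [toReal_gaussianPDF, smul_eq_mul] at h2 h3
  exact ⟨h3, h2⟩

lemma aux_deriv_s11 (w : NNReal) (hw : w ≠ 0) (z : ℝ) :
    HasDerivAt (gaussianPDFReal 0 w) (-(z / w) * gaussianPDFReal 0 w z) z := by
  have hw' : (w : ℝ) ≠ 0 := by exact_mod_cast hw
  rw [gaussianPDFReal_def]
  have h := (((((hasDerivAt_id z).sub_const 0).pow 2).neg.div_const (2 * (w : ℝ))).exp).const_mul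
    (√(2 * Real.pi * w))⁻¹
  refine HasDerivAt.congr_deriv h ?_
  simp
  field_simp

lemma aux_bound (w : NNReal) (hw : w ≠ 0) (z : ℝ) :
    ‖-(z / w) * gaussianPDFReal 0 w z‖ ≤ (√(2 * Real.pi * w))⁻¹ * ((1 + 2 * w) / w) := by
  have hw' : (0 : ℝ) < w := by exact_mod_cast pos_iff_ne_zero.2 hw
  rw [norm_mul, Real.norm_of_nonneg (gaussianPDFReal_nonneg _ _ _), norm_neg, norm_div,
    Real.norm_of_nonneg hw'.le, gaussianPDFReal_def]
  have h1 : |z| * Real.exp (-(z - 0) ^ 2 / (2 * w)) ≤ 1 + 2 * w := by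
    rw [sub_zero, neg_div, Real.exp_neg, ← div_eq_mul_inv, div_le_iff₀ (Real.exp_pos _)]
    have h2 := Real.add_one_le_exp (z ^ 2 / (2 * w))
    have h3 : |z| ≤ (1 + 2 * w) * (z ^ 2 / (2 * w) + 1) := by
      have : (1 + 2 * (w : ℝ)) * (z ^ 2 / (2 * w) + 1) = z ^ 2 / (2 * w) + 1 + z ^ 2 + 2 * w := by
        field_simp
        ring
      rw [this]
      have : 0 ≤ z ^ 2 / (2 * (w : ℝ)) := by positivity
      nlinarith [sq_nonneg (|z| - 1), sq_abs z]
    exact h3.trans (mul_le_mul_of_nonneg_left h2 (by positivity))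
  calc _ = (√(2 * Real.pi * w))⁻¹ * ((|z| * Real.exp (-(z - 0) ^ 2 / (2 * w))) / w) := by
        rw [Real.norm_eq_abs]; ring
    _ ≤ _ := by gcongr

lemma aux_q (μ : Measure ℝ) [IsProbabilityMeasure μ] (w : NNReal) (hw : w ≠ 0) (r : ℝ) :
    Integrable (fun x => gaussianPDFReal 0 w (r - x)) μ ∧
    HasDerivAt (fun r => ∫ x, gaussianPDFReal 0 w (r - x) ∂μ)
      (∫ x, -((r - x) / w) * gaussianPDFReal 0 w (r - x) ∂μ) r := by
  have hm := measurable_gaussianPDFReal 0 w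
  have hms : ∀ r : ℝ, AEStronglyMeasurable (fun x => gaussianPDFReal 0 w (r - x)) μ := fun r =>
    (hm.comp (measurable_const.sub measurable_id)).aestronglyMeasurable
  have hint : Integrable (fun x => gaussianPDFReal 0 w (r - x)) μ := by
    refine Integrable.of_bound (hms r) (√(2 * Real.pi * w))⁻¹
      (Filter.Eventually.of_forall fun x => ?_)
    rw [Real.norm_of_nonneg (gaussianPDFReal_nonneg _ _ _), gaussianPDFReal_def]
    refine mul_le_of_le_one_right (by positivity) (Real.exp_le_one_iff.2 ?_)
    rw [neg_div]
    exact neg_nonpos.2 (by positivity)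
  refine ⟨hint, ?_⟩
  refine (hasDerivAt_integral_of_dominated_loc_of_deriv_le
    (F := fun r x => gaussianPDFReal 0 w (r - x))
    (F' := fun r x => -((r - x) / w) * gaussianPDFReal 0 w (r - x))
    (s := Set.univ) (bound := fun _ => (√(2 * Real.pi * w))⁻¹ * ((1 + 2 * w) / w))
    Filter.univ_mem ?_ hint ?_ ?_ (integrable_const _) ?_).2
  · exact Filter.Eventually.of_forall fun r => hms r
  · exact (by fun_prop : Measurable fun x : ℝ => -((r - x) / (w : ℝ))).aestronglyMeasurable.mul
      (hms r)
  · exact Filter.Eventually.of_forall fun x r _ => aux_bound w hw _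
  · refine Filter.Eventually.of_forall fun x r _ => ?_
    exact (aux_deriv_s11 w hw (r - x)).comp_sub_const r x

/-- Noise-posterior-mean identity underlying denoising score matching: for
`R = X + Z` with `Z ~ N(0, v)` independent of `X`, and `q` the marginal density
of `R`, the posterior mean of the noise satisfies
`E[Z | σ(R)] = −v·q'(R)/q(R)` almost surely. -/
theorem noise_posterior_mean_eq_neg_score
    {Ω : Type*} [MeasureSpace Ω] [IsProbabilityMeasure (ℙ : Measure Ω)]
    (v : ℝ) (hv : 0 < v)
    (X Z : Ω → ℝ) (hX : Measurable X) (hZ : Measurable Z)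
    (hXint : Integrable X ℙ)
    (hZlaw : Measure.map Z ℙ = gaussianReal 0 ⟨v, hv.le⟩)
    (hindep : IndepFun X Z ℙ)
    (R : Ω → ℝ) (hR : R = fun ω => X ω + Z ω)
    (q : ℝ → ℝ)
    (hq : q = fun r => ∫ x, gaussianPDFReal 0 ⟨v, hv.le⟩ (r - x) ∂(Measure.map X ℙ)) :
    ℙ[Z | MeasurableSpace.comap R Real.measurableSpace]
      =ᵐ[ℙ] fun ω => -v * (deriv q (R ω) / q (R ω)) := by
  obtain ⟨w, hwv⟩ : ∃ w : NNReal, w = ⟨v, hv.le⟩ := ⟨_, rfl⟩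
  have hwc : (w : ℝ) = v := by rw [hwv]; rfl
  have hw : w ≠ 0 := by
    intro h; rw [h] at hwc; simp at hwc; exact hv.ne hwc
  rw [← hwv] at hZlaw hq
  have hμ : IsProbabilityMeasure (Measure.map X ℙ) :=
    Measure.isProbabilityMeasure_map hX.aemeasurable
  have hRm : Measurable R := by rw [hR]; fun_prop
  have hle : MeasurableSpace.comap R Real.measurableSpace ≤ MeasureSpace.toMeasurableSpace :=
    hRm.comap_le
  have hZint : Integrable Z ℙ := by
    have h : Integrable id (Measure.map Z ℙ) := by
      rw [hZlaw]
      exact (memLp_id_gaussianReal 1).integrable (by simp)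
    exact (integrable_map_measure aestronglyMeasurable_id hZ.aemeasurable).1 h
  obtain ⟨f, hf, hfR⟩ := (stronglyMeasurable_condExp (μ := (ℙ : Measure Ω)) (f := Z)
    (m := MeasurableSpace.comap R Real.measurableSpace)).measurable.exists_eq_measurable_comp
  have hqpos : ∀ r, 0 < q r := by
    intro r
    rw [hq]
    refine (integral_pos_iff_support_of_nonneg (fun x => gaussianPDFReal_nonneg _ _ _)
      (aux_q _ w hw r).1).2 ?_
    have : Function.support (fun x => gaussianPDFReal 0 w (r - x)) = Set.univ :=
      Set.eq_univ_of_forall fun x => (gaussianPDFReal_pos _ _ _ hw).ne'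
    rw [this]; simp
  have hderiv : ∀ r, ∫ x, gaussianPDFReal 0 w (r - x) * (r - x) ∂(Measure.map X ℙ)
      = -v * deriv q r := by
    intro r
    rw [hq, (aux_q _ w hw r).2.deriv, ← integral_const_mul]
    congr 1; ext x
    rw [hwc]
    field_simp
  have hfint : Integrable (fun ω => f (R ω)) ℙ := by
    have := integrable_condExp (μ := (ℙ : Measure Ω)) (f := Z)
      (m := MeasurableSpace.comap R Real.measurableSpace)
    rw [hfR] at this
    exact this
  have key := aux_int_s11 ℙ w hw X Z hX hZ hZlaw hindep
  have hfq : ∀ r, ∫ x, gaussianPDFReal 0 w (r - x) * f r ∂(Measure.map X ℙ) = q r * f r := by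
    intro r; rw [integral_mul_const, hq]
  have hae : (fun r => q r * f r) =ᵐ[volume] fun r => -v * deriv q r := by
    refine Integrable.ae_eq_of_forall_setIntegral_eq _ _ ?_ ?_ ?_
    · have := (key (fun z => f z.2) (by fun_prop) (by simpa [hR] using hfint)).1
      simpa only [hfq] using this
    · have := (key (fun z => z.2 - z.1) (by fun_prop) (by simpa using hZint)).1
      simpa only [hderiv] using this
    · intro s hs _
      have hs' : MeasurableSet (R ⁻¹' s) := hRm hs
      have hind : ∀ ω, (R ⁻¹' s).indicator Z ω
          = s.indicator (fun r => r - X ω) (X ω + Z ω) := by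
        intro ω
        by_cases h : X ω + Z ω ∈ s
        · have h' : ω ∈ R ⁻¹' s := by rw [hR]; exact h
          rw [Set.indicator_of_mem h, Set.indicator_of_mem h']; ring
        · have h' : ω ∉ R ⁻¹' s := by rw [hR]; exact h
          rw [Set.indicator_of_notMem h, Set.indicator_of_notMem h']
      have h1 := (key (fun z => s.indicator f z.2) ((hf.indicator hs).comp measurable_snd) (by
        have := hfint.indicator hs'
        rw [hR] at this
        exact this)).2
      have h2 := (key (fun z => s.indicator (fun r => r - z.1) z.2) (by
          have : Measurable ((Prod.snd ⁻¹' s).indicator (fun z : ℝ × ℝ => z.2 - z.1)) :=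
            Measurable.indicator (by fun_prop) (measurable_snd hs)
          exact this) (by
        have := hZint.indicator hs'
        refine this.congr (Filter.Eventually.of_forall fun ω => ?_)
        exact hind ω)).2
      have e1 : ∀ r, ∫ x, gaussianPDFReal 0 w (r - x) * s.indicator f r ∂(Measure.map X ℙ)
          = s.indicator (fun r => q r * f r) r := by
        intro r
        by_cases hr : r ∈ s
        · simp only [Set.indicator_of_mem hr, hfq]
        · simp [Set.indicator_of_notMem hr]
      have e2 : ∀ r, ∫ x, gaussianPDFReal 0 w (r - x) * s.indicator (fun r => r - x) r
          ∂(Measure.map X ℙ) = s.indicator (fun r => -v * deriv q r) r := by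
        intro r
        by_cases hr : r ∈ s
        · simp only [Set.indicator_of_mem hr, hderiv]
        · simp [Set.indicator_of_notMem hr]
      simp only [e1] at h1
      simp only [e2] at h2
      rw [integral_indicator hs] at h1 h2
      rw [← h1, ← h2]
      have h3 := setIntegral_condExp hle hZint (s := R ⁻¹' s) ⟨s, hs, rfl⟩
      rw [hfR, ← integral_indicator hs', ← integral_indicator hs'] at h3
      convert h3 using 2
      · ext ω; simp only [hR]; rfl
      · ext ω; exact (hind ω).symm
  have hac : Measure.map R ℙ ≪ volume := by
    have hL := aux_key ℙ w hw X Z hX hZ hZlaw hindep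
    have h1 : Measure.map R ℙ = (Measure.map (fun ω => (X ω, X ω + Z ω)) ℙ).map Prod.snd := by
      rw [Measure.map_map measurable_snd (by fun_prop), hR]; rfl
    rw [h1, hL]
    exact ((withDensity_absolutelyContinuous _ _).map measurable_snd).trans
      Measure.quasiMeasurePreserving_snd.absolutelyContinuous
  have hfin := ae_of_ae_map hRm.aemeasurable (hac.ae_le hae)
  rw [hfR]
  filter_upwards [hfin] with ω hω
  have := (hqpos (R ω)).ne'
  simp only [Function.comp]
  rw [← mul_div_assoc, eq_div_iff this, ← hω, mul_comm]
end
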